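/- Let (A, {,}, d) be a differential graded Poisson algebra over a field k. Then the k-linear map ∂ : A^e → A^e of degree 1 determined on generators by ∂(m_a) = m_{d(a)} and ∂(h_a) = h_{d(a)}, and extended by the graded Leibniz rule ∂(xy) = ∂(x)y + (-1)^{|x|}x∂(y), is well defined on A^e (i.e. ∂ maps the defining relations m_{ab} - m_a m_b, h_{ab} - m_a h_b - (-1)^{|a||b|} m_b h_a, m_{{a,b}} - h_a m_b + (-1)^{|a||b|} m_b h_a, and h_{{a,b}} - h_a h_b + (-1)^{|a||b|} h_b h_a to relations) and satisfies ∂² = 0, so that (A^e, ∂) is a differential graded algebra. -/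

import Mathlib

open scoped TensorProduct

noncomputable section

namespace DGPaper

universe u

/-- A differential graded Lie algebra structure on a `k`-vector space `V`. -/
structure DGLAOn (k : Type u) [Field k] (V : Type u) [AddCommGroup V] [Module k V] where
  gr : ℤ → Submodule k V
  decomp : DirectSum.Decomposition gr
  br : V →ₗ[k] V →ₗ[k] V
  br_mem : ∀ {i j : ℤ} {a b : V}, a ∈ gr i → b ∈ gr j → br a b ∈ gr (i + j)
  br_antisymm : ∀ {i j : ℤ} {a b : V}, a ∈ gr i → b ∈ gr j →
    br a b = -(((-1 : k) ^ (i * j)) • br b a)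
  br_jacobi : ∀ {i j l : ℤ} {a b c : V}, a ∈ gr i → b ∈ gr j → c ∈ gr l →
    br a (br b c) = br (br a b) c + ((-1 : k) ^ (i * j)) • br b (br a c)
  d : V →ₗ[k] V
  d_mem : ∀ {i : ℤ} {a : V}, a ∈ gr i → d a ∈ gr (i + 1)
  d_sq : ∀ a : V, d (d a) = 0
  d_br : ∀ {i j : ℤ} {a b : V}, a ∈ gr i → b ∈ gr j →
    d (br a b) = br (d a) b + ((-1 : k) ^ i) • br a (d b)

/-- A differential graded (associative, unital) algebra structure on a `k`-vector space `N`. -/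
structure DGAOn (k : Type u) [Field k] (N : Type u) [AddCommGroup N] [Module k N] where
  gr : ℤ → Submodule k N
  decomp : DirectSum.Decomposition gr
  mul : N →ₗ[k] N →ₗ[k] N
  one : N
  one_mem : one ∈ gr 0
  mul_mem : ∀ {i j : ℤ} {a b : N}, a ∈ gr i → b ∈ gr j → mul a b ∈ gr (i + j)
  mul_assoc : ∀ a b c : N, mul (mul a b) c = mul a (mul b c)
  one_mul : ∀ a : N, mul one a = a
  mul_one : ∀ a : N, mul a one = a
  d : N →ₗ[k] N
  d_mem : ∀ {i : ℤ} {a : N}, a ∈ gr i → d a ∈ gr (i + 1)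
  d_sq : ∀ a : N, d (d a) = 0
  d_mul : ∀ {i j : ℤ} {a b : N}, a ∈ gr i → b ∈ gr j →
    d (mul a b) = mul (d a) b + ((-1 : k) ^ i) • mul a (d b)

/-- A differential graded Poisson algebra structure on a `k`-vector space `M`. -/
structure DGPAOn (k : Type u) [Field k] (M : Type u) [AddCommGroup M] [Module k M] where
  gr : ℤ → Submodule k M
  decomp : DirectSum.Decomposition gr
  mul : M →ₗ[k] M →ₗ[k] M
  one : M
  one_mem : one ∈ gr 0
  mul_mem : ∀ {i j : ℤ} {a b : M}, a ∈ gr i → b ∈ gr j → mul a b ∈ gr (i + j)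
  mul_assoc : ∀ a b c : M, mul (mul a b) c = mul a (mul b c)
  one_mul : ∀ a : M, mul one a = a
  mul_one : ∀ a : M, mul a one = a
  mul_comm : ∀ {i j : ℤ} {a b : M}, a ∈ gr i → b ∈ gr j →
    mul a b = ((-1 : k) ^ (i * j)) • mul b a
  br : M →ₗ[k] M →ₗ[k] M
  br_mem : ∀ {i j : ℤ} {a b : M}, a ∈ gr i → b ∈ gr j → br a b ∈ gr (i + j)
  br_antisymm : ∀ {i j : ℤ} {a b : M}, a ∈ gr i → b ∈ gr j →
    br a b = -(((-1 : k) ^ (i * j)) • br b a)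
  br_jacobi : ∀ {i j l : ℤ} {a b c : M}, a ∈ gr i → b ∈ gr j → c ∈ gr l →
    br a (br b c) = br (br a b) c + ((-1 : k) ^ (i * j)) • br b (br a c)
  br_deriv : ∀ {i j l : ℤ} {a b c : M}, a ∈ gr i → b ∈ gr j → c ∈ gr l →
    br a (mul b c) = mul (br a b) c + ((-1 : k) ^ (i * j)) • mul b (br a c)
  d : M →ₗ[k] M
  d_mem : ∀ {i : ℤ} {a : M}, a ∈ gr i → d a ∈ gr (i + 1)
  d_sq : ∀ a : M, d (d a) = 0
  d_br : ∀ {i j : ℤ} {a b : M}, a ∈ gr i → b ∈ gr j →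
    d (br a b) = br (d a) b + ((-1 : k) ^ i) • br a (d b)
  d_mul : ∀ {i j : ℤ} {a b : M}, a ∈ gr i → b ∈ gr j →
    d (mul a b) = mul (d a) b + ((-1 : k) ^ i) • mul a (d b)

section Defs

variable {k : Type u} [Field k]

/-- The differential graded Lie algebra underlying a differential graded Poisson algebra. -/
def DGPAOn.toLie {M : Type u} [AddCommGroup M] [Module k M] (P : DGPAOn k M) :
    DGLAOn k M where
  gr := P.gr
  decomp := P.decomp
  br := P.br
  br_mem := P.br_mem
  br_antisymm := P.br_antisymm
  br_jacobi := P.br_jacobi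
  d := P.d
  d_mem := P.d_mem
  d_sq := P.d_sq
  d_br := P.d_br

section Maps

variable {M N : Type u} [AddCommGroup M] [Module k M] [AddCommGroup N] [Module k N]

/-- A morphism of differential graded algebras (degree-0, multiplicative, unital,
commuting with the differentials). -/
def IsDGAHom (E : DGAOn k M) (F : DGAOn k N) (f : M →ₗ[k] N) : Prop :=
  (∀ {n : ℤ} {x : M}, x ∈ E.gr n → f x ∈ F.gr n) ∧
  (∀ x y : M, f (E.mul x y) = F.mul (f x) (f y)) ∧
  f E.one = F.one ∧
  ∀ x : M, f (E.d x) = F.d (f x)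

/-- A morphism of differential graded Poisson algebras. -/
def IsDGPAHom (P : DGPAOn k M) (Q : DGPAOn k N) (f : M →ₗ[k] N) : Prop :=
  (∀ {n : ℤ} {x : M}, x ∈ P.gr n → f x ∈ Q.gr n) ∧
  (∀ x y : M, f (P.mul x y) = Q.mul (f x) (f y)) ∧
  f P.one = Q.one ∧
  (∀ x : M, f (P.d x) = Q.d (f x)) ∧
  ∀ x y : M, f (P.br x y) = Q.br (f x) (f y)

end Maps

section Tensor

variable {A B : Type u} [AddCommGroup A] [Module k A] [AddCommGroup B] [Module k B]

/-- `R` is the tensor product differential graded Poisson algebra structure on `A ⊗[k] B`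
induced by `P` and `Q`. -/
def IsTensorDGPA (P : DGPAOn k A) (Q : DGPAOn k B) (R : DGPAOn k (A ⊗[k] B)) : Prop :=
  (∀ n : ℤ, R.gr n = Submodule.span k {z : A ⊗[k] B |
      ∃ (i j : ℤ) (a : A) (b : B), i + j = n ∧ a ∈ P.gr i ∧ b ∈ Q.gr j ∧ z = a ⊗ₜ[k] b}) ∧
  R.one = P.one ⊗ₜ[k] Q.one ∧
  (∀ {i j i' j' : ℤ} {a a' : A} {b b' : B},
      a ∈ P.gr i → b ∈ Q.gr j → a' ∈ P.gr i' → b' ∈ Q.gr j' →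
    R.mul (a ⊗ₜ[k] b) (a' ⊗ₜ[k] b') = ((-1 : k) ^ (i' * j)) • (P.mul a a' ⊗ₜ[k] Q.mul b b')) ∧
  (∀ {i j : ℤ} {a : A} {b : B}, a ∈ P.gr i → b ∈ Q.gr j →
    R.d (a ⊗ₜ[k] b) = P.d a ⊗ₜ[k] b + ((-1 : k) ^ i) • (a ⊗ₜ[k] Q.d b)) ∧
  (∀ {i j i' j' : ℤ} {a a' : A} {b b' : B},
      a ∈ P.gr i → b ∈ Q.gr j → a' ∈ P.gr i' → b' ∈ Q.gr j' →
    R.br (a ⊗ₜ[k] b) (a' ⊗ₜ[k] b') =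
      ((-1 : k) ^ (i' * j)) • (P.br a a' ⊗ₜ[k] Q.mul b b' + P.mul a a' ⊗ₜ[k] Q.br b b'))

/-- `G` is the tensor product differential graded algebra structure on `A ⊗[k] B`
induced by `E` and `F` (with the Koszul sign rule). -/
def IsTensorDGA (E : DGAOn k A) (F : DGAOn k B) (G : DGAOn k (A ⊗[k] B)) : Prop :=
  (∀ n : ℤ, G.gr n = Submodule.span k {z : A ⊗[k] B |
      ∃ (i j : ℤ) (x : A) (y : B), i + j = n ∧ x ∈ E.gr i ∧ y ∈ F.gr j ∧ z = x ⊗ₜ[k] y}) ∧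
  G.one = E.one ⊗ₜ[k] F.one ∧
  (∀ {i j i' j' : ℤ} {x x' : A} {y y' : B},
      x ∈ E.gr i → y ∈ F.gr j → x' ∈ E.gr i' → y' ∈ F.gr j' →
    G.mul (x ⊗ₜ[k] y) (x' ⊗ₜ[k] y') = ((-1 : k) ^ (i' * j)) • (E.mul x x' ⊗ₜ[k] F.mul y y')) ∧
  (∀ {i j : ℤ} {x : A} {y : B}, x ∈ E.gr i → y ∈ F.gr j →
    G.d (x ⊗ₜ[k] y) = E.d x ⊗ₜ[k] y + ((-1 : k) ^ i) • (x ⊗ₜ[k] F.d y))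

end Tensor

section Env

variable {M : Type u} [AddCommGroup M] [Module k M]

/-- The defining relations of the universal enveloping algebra `A^e` of a differential
graded Poisson algebra, imposed on the tensor algebra of `M × M`; the first copy of `M`
gives the generators `m_a`, the second copy the generators `h_a`. -/
inductive EnvRel (P : DGPAOn k M) :
    TensorAlgebra k (M × M) → TensorAlgebra k (M × M) → Prop
  | relone : EnvRel P (TensorAlgebra.ι k ((P.one, 0) : M × M)) 1
  | relmul (a b : M) :
      EnvRel P (TensorAlgebra.ι k ((P.mul a b, 0) : M × M))
        (TensorAlgebra.ι k ((a, 0) : M × M) * TensorAlgebra.ι k ((b, 0) : M × M))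
  | relhmul {i j : ℤ} {a b : M} (ha : a ∈ P.gr i) (hb : b ∈ P.gr j) :
      EnvRel P (TensorAlgebra.ι k ((0, P.mul a b) : M × M))
        (TensorAlgebra.ι k ((a, 0) : M × M) * TensorAlgebra.ι k ((0, b) : M × M) +
          ((-1 : k) ^ (i * j)) •
            (TensorAlgebra.ι k ((b, 0) : M × M) * TensorAlgebra.ι k ((0, a) : M × M)))
  | relmbr {i j : ℤ} {a b : M} (ha : a ∈ P.gr i) (hb : b ∈ P.gr j) :
      EnvRel P (TensorAlgebra.ι k ((P.br a b, 0) : M × M))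
        (TensorAlgebra.ι k ((0, a) : M × M) * TensorAlgebra.ι k ((b, 0) : M × M) -
          ((-1 : k) ^ (i * j)) •
            (TensorAlgebra.ι k ((b, 0) : M × M) * TensorAlgebra.ι k ((0, a) : M × M)))
  | relhbr {i j : ℤ} {a b : M} (ha : a ∈ P.gr i) (hb : b ∈ P.gr j) :
      EnvRel P (TensorAlgebra.ι k ((0, P.br a b) : M × M))
        (TensorAlgebra.ι k ((0, a) : M × M) * TensorAlgebra.ι k ((0, b) : M × M) -
          ((-1 : k) ^ (i * j)) •
            (TensorAlgebra.ι k ((0, b) : M × M) * TensorAlgebra.ι k ((0, a) : M × M)))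

/-- The universal enveloping algebra `A^e` of a differential graded Poisson algebra,
as a quotient of the tensor algebra on two copies of `A`. -/
abbrev Env (P : DGPAOn k M) : Type u := RingQuot (EnvRel P)

/-- The generators `m_a` of `A^e`. -/
def mgen (P : DGPAOn k M) : M →ₗ[k] Env P :=
  (RingQuot.mkAlgHom k (EnvRel P)).toLinearMap ∘ₗ
    ((TensorAlgebra.ι k : (M × M) →ₗ[k] TensorAlgebra k (M × M)) ∘ₗ LinearMap.inl k M M)

/-- The generators `h_a` of `A^e`. -/
def hgen (P : DGPAOn k M) : M →ₗ[k] Env P :=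
  (RingQuot.mkAlgHom k (EnvRel P)).toLinearMap ∘ₗ
    ((TensorAlgebra.ι k : (M × M) →ₗ[k] TensorAlgebra k (M × M)) ∘ₗ LinearMap.inr k M M)

/-- `E` is the differential graded algebra structure on `A^e`, with the ring
multiplication of `A^e`, grading `|m_a| = |h_a| = |a|` and differential determined by
`∂(m_a) = m_{d a}`, `∂(h_a) = h_{d a}` and the graded Leibniz rule. -/
def IsEnvDGA (P : DGPAOn k M) (E : DGAOn k (Env P)) : Prop :=
  (∀ x y : Env P, E.mul x y = x * y) ∧
  E.one = 1 ∧
  (∀ {i : ℤ} {a : M}, a ∈ P.gr i → mgen P a ∈ E.gr i) ∧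
  (∀ {i : ℤ} {a : M}, a ∈ P.gr i → hgen P a ∈ E.gr i) ∧
  (∀ a : M, E.d (mgen P a) = mgen P (P.d a)) ∧
  (∀ a : M, E.d (hgen P a) = hgen P (P.d a))

end Env

section Lie

variable {V : Type u} [AddCommGroup V] [Module k V]

/-- The defining relations of the universal enveloping algebra of a differential graded
Lie algebra. -/
inductive LieRel (L : DGLAOn k V) : TensorAlgebra k V → TensorAlgebra k V → Prop
  | rel {i j : ℤ} {a b : V} (ha : a ∈ L.gr i) (hb : b ∈ L.gr j) :
      LieRel L
        (TensorAlgebra.ι k a * TensorAlgebra.ι k b -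
          ((-1 : k) ^ (i * j)) • (TensorAlgebra.ι k b * TensorAlgebra.ι k a))
        (TensorAlgebra.ι k (L.br a b))

/-- The universal enveloping algebra `U(L)` of a differential graded Lie algebra `L`. -/
abbrev ULie (L : DGLAOn k V) : Type u := RingQuot (LieRel L)

/-- The canonical map `L → U(L)`. -/
def uGen (L : DGLAOn k V) : V →ₗ[k] ULie L :=
  (RingQuot.mkAlgHom k (LieRel L)).toLinearMap ∘ₗ TensorAlgebra.ι k

/-- `E` is the differential graded algebra structure of `U(L)`. -/
def IsULieDGA (L : DGLAOn k V) (E : DGAOn k (ULie L)) : Prop :=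
  (∀ x y : ULie L, E.mul x y = x * y) ∧
  E.one = 1 ∧
  (∀ {i : ℤ} {a : V}, a ∈ L.gr i → uGen L a ∈ E.gr i) ∧
  (∀ a : V, E.d (uGen L a) = uGen L (L.d a))

/-- The graded-symmetry relations defining the graded symmetric algebra of `L`. -/
inductive SymRel (L : DGLAOn k V) : TensorAlgebra k V → TensorAlgebra k V → Prop
  | rel {i j : ℤ} {a b : V} (ha : a ∈ L.gr i) (hb : b ∈ L.gr j) :
      SymRel L (TensorAlgebra.ι k a * TensorAlgebra.ι k b)
        (((-1 : k) ^ (i * j)) • (TensorAlgebra.ι k b * TensorAlgebra.ι k a))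

/-- The graded symmetric algebra `𝕊L` of a differential graded Lie algebra `L`. -/
abbrev SymAlg (L : DGLAOn k V) : Type u := RingQuot (SymRel L)

/-- The canonical map `L → 𝕊L`. -/
def sGen (L : DGLAOn k V) : V →ₗ[k] SymAlg L :=
  (RingQuot.mkAlgHom k (SymRel L)).toLinearMap ∘ₗ TensorAlgebra.ι k

/-- `R` is the differential graded Poisson algebra structure on `𝕊L` with differential
extending `d` and bracket extending the Lie bracket of `L` as a graded biderivation. -/
def IsSymDGPA (L : DGLAOn k V) (R : DGPAOn k (SymAlg L)) : Prop :=
  (∀ x y : SymAlg L, R.mul x y = x * y) ∧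
  R.one = 1 ∧
  (∀ {i : ℤ} {a : V}, a ∈ L.gr i → sGen L a ∈ R.gr i) ∧
  (∀ a : V, R.d (sGen L a) = sGen L (L.d a)) ∧
  (∀ a b : V, R.br (sGen L a) (sGen L b) = sGen L (L.br a b))

/-- `S` is the graded semidirect product differential graded Lie algebra `L ⋊ L`. -/
def IsSemidirect (L : DGLAOn k V) (S : DGLAOn k (V × V)) : Prop :=
  (∀ n : ℤ, S.gr n = (L.gr n).prod (L.gr n)) ∧
  (∀ z : V × V, S.d z = (L.d z.1, L.d z.2)) ∧
  (∀ {i j : ℤ} {x₁ x₂ y₁ y₂ : V}, x₁ ∈ L.gr i → x₂ ∈ L.gr i → y₁ ∈ L.gr j → y₂ ∈ L.gr j →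
    S.br (x₁, x₂) (y₁, y₂) =
      (L.br x₂ y₁ - ((-1 : k) ^ (i * j)) • L.br y₂ x₁, L.br x₂ y₂))

end Lie

section Smash

variable {M : Type u} [AddCommGroup M] [Module k M]

/-- The generators `1#(ab) - a#b - (-1)^{|a||b|} b#a` of the ideal defining `A^E`
inside the smash product `A # U(A)`. -/
def smashGens (P : DGPAOn k M) : Set (M ⊗[k] ULie P.toLie) :=
  {z | ∃ (i j : ℤ) (a b : M), a ∈ P.gr i ∧ b ∈ P.gr j ∧
    z = P.one ⊗ₜ[k] uGen P.toLie (P.mul a b) - a ⊗ₜ[k] uGen P.toLie b -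
        ((-1 : k) ^ (i * j)) • (b ⊗ₜ[k] uGen P.toLie a)}

/-- The two-sided ideal generated by a set `T` in a differential graded algebra `S`. -/
def idealGen {N : Type u} [AddCommGroup N] [Module k N] (S : DGAOn k N) (T : Set N) :
    Submodule k N :=
  sInf {I : Submodule k N | T ⊆ I ∧ ∀ x ∈ I, ∀ y : N, S.mul x y ∈ I ∧ S.mul y x ∈ I}

/-- `S` is the smash product differential graded algebra `A # U(A)`. -/
def IsSmash (P : DGPAOn k M) (EU : DGAOn k (ULie P.toLie))
    (S : DGAOn k (M ⊗[k] ULie P.toLie)) : Prop :=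
  S.one = P.one ⊗ₜ[k] (1 : ULie P.toLie) ∧
  (∀ a b : M, S.mul (a ⊗ₜ[k] (1 : ULie P.toLie)) (b ⊗ₜ[k] (1 : ULie P.toLie)) =
      P.mul a b ⊗ₜ[k] (1 : ULie P.toLie)) ∧
  (∀ u v : ULie P.toLie, S.mul (P.one ⊗ₜ[k] u) (P.one ⊗ₜ[k] v) = P.one ⊗ₜ[k] (u * v)) ∧
  (∀ (a : M) (u : ULie P.toLie), S.mul (a ⊗ₜ[k] (1 : ULie P.toLie)) (P.one ⊗ₜ[k] u) =
      a ⊗ₜ[k] u) ∧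
  (∀ {i j : ℤ} {c b : M}, c ∈ P.gr i → b ∈ P.gr j →
    S.mul (P.one ⊗ₜ[k] uGen P.toLie c) (b ⊗ₜ[k] (1 : ULie P.toLie)) =
      P.br c b ⊗ₜ[k] (1 : ULie P.toLie) + ((-1 : k) ^ (i * j)) • (b ⊗ₜ[k] uGen P.toLie c)) ∧
  (∀ {i j : ℤ} {a : M} {u : ULie P.toLie}, a ∈ P.gr i → u ∈ EU.gr j →
      a ⊗ₜ[k] u ∈ S.gr (i + j)) ∧
  (∀ {i : ℤ} {a : M}, a ∈ P.gr i → ∀ u : ULie P.toLie,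
    S.d (a ⊗ₜ[k] u) = P.d a ⊗ₜ[k] u + ((-1 : k) ^ i) • (a ⊗ₜ[k] EU.d u))

/-- `R` is the quotient differential graded algebra structure of `S` by the ideal `I`. -/
def IsQuotDGA {N : Type u} [AddCommGroup N] [Module k N] (S : DGAOn k N)
    (I : Submodule k N) (R : DGAOn k (N ⧸ I)) : Prop :=
  (∀ n : ℤ, R.gr n = Submodule.map I.mkQ (S.gr n)) ∧
  R.one = I.mkQ S.one ∧
  (∀ x y : N, R.mul (I.mkQ x) (I.mkQ y) = I.mkQ (S.mul x y)) ∧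
  (∀ x : N, R.d (I.mkQ x) = I.mkQ (S.d x))

end Smash

section Op

variable {M N : Type u} [AddCommGroup M] [Module k M] [AddCommGroup N] [Module k N]

/-- `P'` is the opposite differential graded Poisson algebra of `P` (the product is
unchanged by graded commutativity, the bracket is negated). -/
def IsOpDGPA (P P' : DGPAOn k M) : Prop :=
  P'.gr = P.gr ∧ (∀ x y : M, P'.mul x y = P.mul x y) ∧ P'.one = P.one ∧ P'.d = P.d ∧
  (∀ x y : M, P'.br x y = - P.br x y)

/-- `E'` is the opposite differential graded algebra of `E` (with the Koszul sign). -/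
def IsOpDGA (E E' : DGAOn k N) : Prop :=
  E'.gr = E.gr ∧ E'.one = E.one ∧ E'.d = E.d ∧
  (∀ {i j : ℤ} {x y : N}, x ∈ E.gr i → y ∈ E.gr j →
    E'.mul x y = ((-1 : k) ^ (i * j)) • E.mul y x)

end Op

section UEnv

variable {M N : Type u} [AddCommGroup M] [Module k M] [AddCommGroup N] [Module k N]

/-- A pair `(f, g)` where `f : A → D` is a differential graded algebra map and
`g : A → D_L` is a differential graded Lie algebra map (into the graded commutator Lie
structure of `D`), satisfying the two compatibility conditions of the universal property
of the universal enveloping algebra of a differential graded Poisson algebra. -/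
def UEPair (P : DGPAOn k M) (D : DGAOn k N) (f g : M →ₗ[k] N) : Prop :=
  (∀ {n : ℤ} {x : M}, x ∈ P.gr n → f x ∈ D.gr n) ∧
  (∀ {n : ℤ} {x : M}, x ∈ P.gr n → g x ∈ D.gr n) ∧
  (∀ a b : M, f (P.mul a b) = D.mul (f a) (f b)) ∧
  f P.one = D.one ∧
  (∀ a : M, f (P.d a) = D.d (f a)) ∧
  (∀ a : M, g (P.d a) = D.d (g a)) ∧
  (∀ {i j : ℤ} {a b : M}, a ∈ P.gr i → b ∈ P.gr j →
    g (P.br a b) = D.mul (g a) (g b) - ((-1 : k) ^ (i * j)) • D.mul (g b) (g a)) ∧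
  (∀ {i j : ℤ} {a b : M}, a ∈ P.gr i → b ∈ P.gr j →
    f (P.br a b) = D.mul (g a) (f b) - ((-1 : k) ^ (i * j)) • D.mul (f b) (g a)) ∧
  (∀ {i j : ℤ} {a b : M}, a ∈ P.gr i → b ∈ P.gr j →
    g (P.mul a b) = D.mul (f a) (g b) + ((-1 : k) ^ (i * j)) • D.mul (f b) (g a))

/-- `(E, α, β)` is a universal enveloping algebra of the differential graded Poisson
algebra `P`. -/
def IsUEnv (P : DGPAOn k M) (E : DGAOn k N) (α β : M →ₗ[k] N) : Prop :=
  UEPair P E α β ∧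
  ∀ (D' : Type u) [AddCommGroup D'] [Module k D'] (D : DGAOn k D') (f g : M →ₗ[k] D'),
    UEPair P D f g →
    ∃! φ : N →ₗ[k] D',
      IsDGAHom E D φ ∧ (∀ a : M, φ (α a) = f a) ∧ (∀ a : M, φ (β a) = g a)

end UEnv

section IdealsQuotients

variable {M : Type u} [AddCommGroup M] [Module k M]

/-- `B` is a differential graded Poisson ideal of `P`. -/
def IsDGPIdeal (P : DGPAOn k M) (B : Submodule k M) : Prop :=
  (B = ⨆ n : ℤ, B ⊓ P.gr n) ∧
  (∀ x ∈ B, P.d x ∈ B) ∧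
  (∀ x ∈ B, ∀ a : M, P.mul x a ∈ B) ∧
  (∀ x ∈ B, ∀ a : M, P.mul a x ∈ B) ∧
  (∀ x ∈ B, ∀ a : M, P.br a x ∈ B)

/-- `B` is a differential graded Poisson subalgebra of `P`. -/
def IsDGPSubalg (P : DGPAOn k M) (B : Submodule k M) : Prop :=
  (B = ⨆ n : ℤ, B ⊓ P.gr n) ∧ P.one ∈ B ∧
  (∀ x ∈ B, ∀ y ∈ B, P.mul x y ∈ B) ∧
  (∀ x ∈ B, P.d x ∈ B) ∧
  (∀ x ∈ B, ∀ y ∈ B, P.br x y ∈ B)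

/-- `R` is the quotient differential graded Poisson algebra structure on `M ⧸ B`. -/
def IsQuotDGPA (P : DGPAOn k M) (B : Submodule k M) (R : DGPAOn k (M ⧸ B)) : Prop :=
  (∀ n : ℤ, R.gr n = Submodule.map B.mkQ (P.gr n)) ∧
  R.one = B.mkQ P.one ∧
  (∀ x y : M, R.mul (B.mkQ x) (B.mkQ y) = B.mkQ (P.mul x y)) ∧
  (∀ x : M, R.d (B.mkQ x) = B.mkQ (P.d x)) ∧
  (∀ x y : M, R.br (B.mkQ x) (B.mkQ y) = B.mkQ (P.br x y))

/-- `S` is the differential graded Poisson algebra structure induced on a differential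
graded Poisson subalgebra `B` of `P`. -/
def IsSubDGPA (P : DGPAOn k M) (B : Submodule k M) (S : DGPAOn k B) : Prop :=
  (∀ n : ℤ, S.gr n = Submodule.comap B.subtype (P.gr n)) ∧
  ((S.one : M) = P.one) ∧
  (∀ x y : B, (S.mul x y : M) = P.mul (x : M) (y : M)) ∧
  (∀ x : B, (S.d x : M) = P.d (x : M)) ∧
  (∀ x y : B, (S.br x y : M) = P.br (x : M) (y : M))

/-- The cocycles `ker d` of a differential graded Poisson algebra. -/
def Cocycles (P : DGPAOn k M) : Submodule k M := LinearMap.ker P.d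

/-- The coboundaries `im d`, viewed inside the cocycles. -/
def CobIn (P : DGPAOn k M) : Submodule k (Cocycles P) :=
  Submodule.comap (Cocycles P).subtype (LinearMap.range P.d)

/-- The cohomology `H(A) = ker d / im d` of a differential graded Poisson algebra. -/
abbrev Cohom (P : DGPAOn k M) : Type u := Cocycles P ⧸ CobIn P

/-- The class map `ker d → H(A)`. -/
def cohCls (P : DGPAOn k M) : Cocycles P →ₗ[k] Cohom P := (CobIn P).mkQ

/-- `R` is the graded Poisson algebra structure on the cohomology of `P` (a differential
graded Poisson algebra structure with zero differential, with the induced grading,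
product and bracket). -/
def IsCohomDGPA (P : DGPAOn k M) (R : DGPAOn k (Cohom P)) : Prop :=
  R.d = 0 ∧
  (∀ n : ℤ, R.gr n =
    Submodule.map (cohCls P) (Submodule.comap (Cocycles P).subtype (P.gr n))) ∧
  (∀ h : P.one ∈ Cocycles P, R.one = cohCls P ⟨P.one, h⟩) ∧
  (∀ (a b : Cocycles P) (h : P.mul (a : M) (b : M) ∈ Cocycles P),
    R.mul (cohCls P a) (cohCls P b) = cohCls P ⟨P.mul (a : M) (b : M), h⟩) ∧
  (∀ (a b : Cocycles P) (h : P.br (a : M) (b : M) ∈ Cocycles P),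
    R.br (cohCls P a) (cohCls P b) = cohCls P ⟨P.br (a : M) (b : M), h⟩)

end IdealsQuotients

end Defs

section ModuleDefs

variable {k : Type u} [Field k]

/-- A left differential graded module structure on `X` over the differential graded
algebra `E`. -/
structure DGModOn {N : Type u} [AddCommGroup N] [Module k N] (E : DGAOn k N)
    (X : Type u) [AddCommGroup X] [Module k X] where
  grm : ℤ → Submodule k X
  decomp : DirectSum.Decomposition grm
  act : N →ₗ[k] X →ₗ[k] X
  act_one : ∀ x : X, act E.one x = x
  act_mul : ∀ (r s : N) (x : X), act (E.mul r s) x = act r (act s x)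
  act_mem : ∀ {i j : ℤ} {r : N} {x : X}, r ∈ E.gr i → x ∈ grm j → act r x ∈ grm (i + j)
  dm : X →ₗ[k] X
  dm_mem : ∀ {i : ℤ} {x : X}, x ∈ grm i → dm x ∈ grm (i + 1)
  dm_sq : ∀ x : X, dm (dm x) = 0
  dm_act : ∀ {i : ℤ} {r : N}, r ∈ E.gr i → ∀ x : X,
    dm (act r x) = act (E.d r) x + ((-1 : k) ^ i) • act r (dm x)

/-- A left differential graded Poisson module structure on `X` over the differential
graded Poisson algebra `P`. -/
structure DGPModOn {M : Type u} [AddCommGroup M] [Module k M] (P : DGPAOn k M)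
    (X : Type u) [AddCommGroup X] [Module k X] where
  grm : ℤ → Submodule k X
  decomp : DirectSum.Decomposition grm
  act : M →ₗ[k] X →ₗ[k] X
  act_one : ∀ x : X, act P.one x = x
  act_mul : ∀ (a b : M) (x : X), act (P.mul a b) x = act a (act b x)
  act_mem : ∀ {i j : ℤ} {a : M} {x : X}, a ∈ P.gr i → x ∈ grm j → act a x ∈ grm (i + j)
  dm : X →ₗ[k] X
  dm_mem : ∀ {i : ℤ} {x : X}, x ∈ grm i → dm x ∈ grm (i + 1)
  dm_sq : ∀ x : X, dm (dm x) = 0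
  dm_act : ∀ {i : ℤ} {a : M}, a ∈ P.gr i → ∀ x : X,
    dm (act a x) = act (P.d a) x + ((-1 : k) ^ i) • act a (dm x)
  bact : M →ₗ[k] X →ₗ[k] X
  bact_mem : ∀ {i j : ℤ} {a : M} {x : X}, a ∈ P.gr i → x ∈ grm j → bact a x ∈ grm (i + j)
  bact_amod : ∀ {i j : ℤ} {a b : M}, a ∈ P.gr i → b ∈ P.gr j → ∀ x : X,
    bact a (act b x) = act (P.br a b) x + ((-1 : k) ^ (i * j)) • act b (bact a x)
  bact_mulact : ∀ {i j : ℤ} {a b : M}, a ∈ P.gr i → b ∈ P.gr j → ∀ x : X,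
    bact (P.mul a b) x = act a (bact b x) + ((-1 : k) ^ (i * j)) • act b (bact a x)
  bact_jacobi : ∀ {i j : ℤ} {a b : M}, a ∈ P.gr i → b ∈ P.gr j → ∀ x : X,
    bact a (bact b x) = bact (P.br a b) x + ((-1 : k) ^ (i * j)) • bact b (bact a x)
  dm_bact : ∀ {i : ℤ} {a : M}, a ∈ P.gr i → ∀ x : X,
    dm (bact a x) = bact (P.d a) x + ((-1 : k) ^ i) • bact a (dm x)

/-- A morphism of left differential graded modules. -/
def IsDGModHom {N X Y : Type u} [AddCommGroup N] [Module k N]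
    [AddCommGroup X] [Module k X] [AddCommGroup Y] [Module k Y]
    {E : DGAOn k N} (W : DGModOn E X) (W' : DGModOn E Y) (f : X →ₗ[k] Y) : Prop :=
  (∀ {n : ℤ} {x : X}, x ∈ W.grm n → f x ∈ W'.grm n) ∧
  (∀ x : X, f (W.dm x) = W'.dm (f x)) ∧
  (∀ (r : N) (x : X), f (W.act r x) = W'.act r (f x))

/-- A morphism of left differential graded Poisson modules. -/
def IsDGPModHom {M X Y : Type u} [AddCommGroup M] [Module k M]
    [AddCommGroup X] [Module k X] [AddCommGroup Y] [Module k Y]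
    {P : DGPAOn k M} (V : DGPModOn P X) (V' : DGPModOn P Y) (f : X →ₗ[k] Y) : Prop :=
  (∀ {n : ℤ} {x : X}, x ∈ V.grm n → f x ∈ V'.grm n) ∧
  (∀ x : X, f (V.dm x) = V'.dm (f x)) ∧
  (∀ (a : M) (x : X), f (V.act a x) = V'.act a (f x)) ∧
  (∀ (a : M) (x : X), f (V.bact a x) = V'.bact a (f x))

/-- The correspondence between a differential graded Poisson module structure over `P`
and a differential graded module structure over `A^e` on the same space. -/
def ModCorr {M X : Type u} [AddCommGroup M] [Module k M] [AddCommGroup X] [Module k X]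
    {P : DGPAOn k M} {E : DGAOn k (Env P)}
    (V : DGPModOn P X) (W : DGModOn E X) : Prop :=
  W.grm = V.grm ∧ W.dm = V.dm ∧
  (∀ (a : M) (x : X), W.act (mgen P a) x = V.act a x) ∧
  (∀ (a : M) (x : X), W.act (hgen P a) x = V.bact a x)

end ModuleDefs

/-!
The relations of `A^e` are homogeneous, so `m_a ↦ m_a T^|a|`, `h_a ↦ h_a T^|a|` defines an algebra
map `A^e → A^e[T, T⁻¹]`; the elements `x` with image `x T^n` form the degree-`n` part of a grading.

For the differential, a linear map `∂` is a graded derivation exactly when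
`x ↦ !![(-1)^|x| x, ∂ x; 0, x]` is multiplicative on homogeneous elements. Hence `∂` exists as soon
as the matrices attached to the generators `m_a`, `h_a` satisfy the relations of `A^e`, and the
upper right entry of this condition says that `∂` maps each defining relation to a relation.
Finally `∂²` obeys an ungraded Leibniz rule because the two cross terms `± ∂x ∂y` cancel, so it
vanishes once it vanishes on generators.
-/

section Decomposition

variable {k M N ι : Type*} [CommSemiring k] [AddCommMonoid M] [Module k M] [AddCommMonoid N]
  [Module k N] [DecidableEq ι]

/-- The linear map on a graded module `M = ⨁ i, ℳ i` that agrees with `f i` on `ℳ i`. -/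
def homogeneousLift (ℳ : ι → Submodule k M) [DirectSum.Decomposition ℳ] (f : ι → M →ₗ[k] N) :
    M →ₗ[k] N :=
  DirectSum.toModule k ι N (fun i => f i ∘ₗ (ℳ i).subtype) ∘ₗ
    (DirectSum.decomposeLinearEquiv ℳ).toLinearMap

lemma homogeneousLift_of_mem {ℳ : ι → Submodule k M} [DirectSum.Decomposition ℳ]
    (f : ι → M →ₗ[k] N) {i : ι} {a : M} (ha : a ∈ ℳ i) : homogeneousLift ℳ f a = f i a := by
  simp only [homogeneousLift, LinearMap.comp_apply, LinearEquiv.coe_coe,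
    DirectSum.decomposeLinearEquiv_apply]
  rw [DirectSum.decompose_of_mem ℳ ha, ← DirectSum.lof_eq_of k, DirectSum.toModule_lof]
  rfl

lemma linearMap_ext_homogeneous (ℳ : ι → Submodule k M) [DirectSum.Decomposition ℳ]
    {f g : M →ₗ[k] N} (h : ∀ i, ∀ a ∈ ℳ i, f a = g a) : f = g := by
  ext a
  induction a using DirectSum.Decomposition.inductionOn ℳ with
  | zero => simp only [map_zero]
  | homogeneous a => exact h _ a a.2
  | add a b ha hb => simp only [map_add, ha, hb]

lemma le_of_iSup_eq_top_of_le {ℳ 𝒲 : ι → Submodule k M} [DirectSum.Decomposition ℳ]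
    (hle : ∀ i, 𝒲 i ≤ ℳ i) (htop : ⨆ i, 𝒲 i = ⊤) (i : ι) : ℳ i ≤ 𝒲 i := by
  have component_mem (x : M) : (DirectSum.decompose ℳ x i : M) ∈ 𝒲 i := by
    have hx : x ∈ ⨆ j, 𝒲 j := htop ▸ Submodule.mem_top
    induction hx using Submodule.iSup_induction' with
    | mem j x hx =>
      obtain rfl | hij := eq_or_ne j i
      · rwa [DirectSum.decompose_of_mem_same ℳ (hle j hx)]
      · rw [DirectSum.decompose_of_mem_ne ℳ (hle j hx) hij]
        exact zero_mem _
    | zero => simp only [DirectSum.decompose_zero, DirectSum.zero_apply, ZeroMemClass.coe_zero,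
        zero_mem]
    | add x y _ _ hx hy =>
      rw [DirectSum.decompose_add, DirectSum.add_apply, Submodule.coe_add]
      exact add_mem hx hy
  intro x hx
  simpa only [DirectSum.decompose_of_mem_same ℳ hx] using component_mem x

end Decomposition

section GradedAlgebra

variable {k B ι : Type*} [CommSemiring k] [Semiring B] [Algebra k B] [AddMonoid ι]
  {S : ι → Set B}

lemma iSup_eq_top_of_adjoin_eq_top (𝒲 : ι → Submodule k B) [SetLike.GradedMonoid 𝒲]
    (hS : Algebra.adjoin k (⋃ i, S i) = ⊤) (hS𝒲 : ∀ i, S i ⊆ 𝒲 i) : ⨆ i, 𝒲 i = ⊤ := by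
  classical
  have adjoin_le : Algebra.adjoin k (⋃ i, S i) ≤ (DirectSum.coeAlgHom 𝒲).range := by
    refine Algebra.adjoin_le (Set.iUnion_subset fun i s hs => ?_)
    exact ⟨DirectSum.of (fun i => 𝒲 i) i ⟨s, hS𝒲 i hs⟩, DirectSum.coeAlgHom_of 𝒲 i _⟩
  have range_eq_top : (DirectSum.coeAlgHom 𝒲).range = ⊤ := top_unique (hS.ge.trans adjoin_le)
  rw [Submodule.iSup_eq_toSubmodule_range, range_eq_top, Algebra.top_toSubmodule]

theorem homogeneous_induction [DecidableEq ι] {𝒜 : ι → Submodule k B} [GradedAlgebra 𝒜]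
    (hS : Algebra.adjoin k (⋃ i, S i) = ⊤) (hS𝒜 : ∀ i, S i ⊆ 𝒜 i) {p : ι → B → Prop}
    (generator : ∀ i, ∀ s ∈ S i, p i s) (one : p 0 1)
    (mul : ∀ {i j x y}, x ∈ 𝒜 i → y ∈ 𝒜 j → p i x → p j y → p (i + j) (x * y))
    (zero : ∀ i, p i 0) (add : ∀ {i x y}, p i x → p i y → p i (x + y))
    (smul : ∀ {i x} (c : k), p i x → p i (c • x)) {i : ι} {x : B} (hx : x ∈ 𝒜 i) : p i x := by
  let 𝒲 (i : ι) : Submodule k B :=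
    { carrier := {x | x ∈ 𝒜 i ∧ p i x}
      add_mem' := fun hx hy => ⟨add_mem hx.1 hy.1, add hx.2 hy.2⟩
      zero_mem' := ⟨zero_mem _, zero i⟩
      smul_mem' := fun c _ hx => ⟨Submodule.smul_mem _ c hx.1, smul c hx.2⟩ }
  have : SetLike.GradedMonoid 𝒲 :=
    { one_mem := ⟨SetLike.one_mem_graded 𝒜, one⟩
      mul_mem := fun _ _ _ _ hx hy =>
        ⟨SetLike.mul_mem_graded hx.1 hy.1, mul hx.1 hy.1 hx.2 hy.2⟩ }
  have htop : ⨆ i, 𝒲 i = ⊤ :=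
    iSup_eq_top_of_adjoin_eq_top 𝒲 hS fun i s hs => ⟨hS𝒜 i hs, generator i s hs⟩
  have 𝒲_le (i : ι) : 𝒲 i ≤ 𝒜 i := fun _ hx => hx.1
  exact (le_of_iSup_eq_top_of_le 𝒲_le htop i hx).2

/-- The degree-`i` part of `B` for an algebra map `φ : B → B[ι]`: those `x` with `φ x = x T^i`. -/
def coactionGrading (φ : B →ₐ[k] AddMonoidAlgebra B ι) (i : ι) : Submodule k B :=
  LinearMap.eqLocus φ.toLinearMap (AddMonoidAlgebra.lsingle i)

variable {φ : B →ₐ[k] AddMonoidAlgebra B ι}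

lemma mem_coactionGrading {i : ι} {x : B} :
    x ∈ coactionGrading φ i ↔ φ x = AddMonoidAlgebra.single i x :=
  Iff.rfl

instance coactionGrading_gradedMonoid : SetLike.GradedMonoid (coactionGrading φ) where
  one_mem := by rw [mem_coactionGrading, map_one, AddMonoidAlgebra.one_def]
  mul_mem i j x y hx hy := by
    rw [mem_coactionGrading] at *
    rw [map_mul, hx, hy, AddMonoidAlgebra.single_mul_single]

lemma coeff_coaction_coeAddMonoidHom [DecidableEq ι]
    (z : DirectSum ι fun i => coactionGrading φ i) (i : ι) :
    (φ (DirectSum.coeAddMonoidHom (coactionGrading φ) z)).coeff i = z i := by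
  induction z using DirectSum.induction_on with
  | zero => simp only [map_zero, AddMonoidAlgebra.coeff_zero, Finsupp.coe_zero, Pi.zero_apply,
      DirectSum.zero_apply, ZeroMemClass.coe_zero]
  | of j x =>
    rw [DirectSum.coeAddMonoidHom_of, mem_coactionGrading.mp x.2, DirectSum.coe_of_apply]
    simp [Finsupp.single_apply, apply_ite Subtype.val]
  | add x y hx hy => simp only [map_add, AddMonoidAlgebra.coeff_add, Finsupp.add_apply, hx, hy,
      DirectSum.add_apply, Submodule.coe_add]

lemma isInternal_coactionGrading [DecidableEq ι] (hS : Algebra.adjoin k (⋃ i, S i) = ⊤)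
    (hSφ : ∀ i, S i ⊆ coactionGrading φ i) : DirectSum.IsInternal (coactionGrading φ) := by
  refine ⟨fun z w hzw => ?_,
    LinearMap.range_eq_top (f := DirectSum.coeLinearMap (coactionGrading φ)).mp ?_⟩
  · ext i
    rw [← coeff_coaction_coeAddMonoidHom z, ← coeff_coaction_coeAddMonoidHom w, hzw]
  · rw [DirectSum.range_coeLinearMap, iSup_eq_top_of_adjoin_eq_top _ hS hSφ]

end GradedAlgebra

section GradedDerivation

variable {k B : Type*} [Field k]

lemma neg_one_zpow_add (i j : ℤ) : (-1 : k) ^ (i + j) = (-1) ^ i * (-1) ^ j :=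
  zpow_add₀ (neg_ne_zero.mpr one_ne_zero) i j

lemma neg_one_zpow_mul_self (i : ℤ) : (-1 : k) ^ i * (-1) ^ i = 1 := by
  rw [← mul_zpow, neg_mul_neg, one_mul, one_zpow]

lemma neg_one_zpow_add_one_mul (i j : ℤ) :
    (-1 : k) ^ ((i + 1) * j) = (-1) ^ (i * j) * (-1) ^ j := by
  rw [add_one_mul, neg_one_zpow_add]

lemma neg_one_zpow_mul_zpow_mul_add_one (i j : ℤ) :
    (-1 : k) ^ i * (-1) ^ (i * (j + 1)) = (-1) ^ (i * j) := by
  rw [mul_add_one, neg_one_zpow_add, mul_left_comm, neg_one_zpow_mul_self, mul_one]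

variable [Ring B] [Algebra k B]

/-- A degree-one derivation of the graded algebra `𝒜`, in the sense of the Leibniz rule with
Koszul sign `(-1)^|x|`; no condition on the degrees of the values is imposed. -/
def IsGradedDerivation (𝒜 : ℤ → Submodule k B) (D : B →ₗ[k] B) : Prop :=
  ∀ ⦃i j x y⦄, x ∈ 𝒜 i → y ∈ 𝒜 j → D (x * y) = D x * y + (-1 : k) ^ i • (x * D y)

variable {𝒜 : ℤ → Submodule k B} {D : B →ₗ[k] B} {S : ℤ → Set B}

lemma IsGradedDerivation.map_one [SetLike.GradedMonoid 𝒜] (hD : IsGradedDerivation 𝒜 D) :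
    D 1 = 0 := by
  simpa using hD (SetLike.one_mem_graded 𝒜) (SetLike.one_mem_graded 𝒜)

theorem IsGradedDerivation.map_mem [GradedAlgebra 𝒜] (hD : IsGradedDerivation 𝒜 D)
    (hS : Algebra.adjoin k (⋃ i, S i) = ⊤) (hS𝒜 : ∀ i, S i ⊆ 𝒜 i)
    (hDS : ∀ i, ∀ s ∈ S i, D s ∈ 𝒜 (i + 1)) {i : ℤ} {x : B} (hx : x ∈ 𝒜 i) :
    D x ∈ 𝒜 (i + 1) := by
  refine homogeneous_induction (p := fun i x => D x ∈ 𝒜 (i + 1)) hS hS𝒜 hDS ?one ?mul ?zero ?add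
    ?smul hx
  case one => rw [hD.map_one]; exact zero_mem _
  case mul =>
    intro i j x y hx hy hDx hDy
    rw [hD hx hy]
    refine add_mem ?_ (Submodule.smul_mem _ _ ?_)
    · rw [add_right_comm]; exact SetLike.mul_mem_graded hDx hy
    · rw [add_assoc]; exact SetLike.mul_mem_graded hx hDy
  case zero => intro i; rw [map_zero]; exact zero_mem _
  case add => intro i x y hx hy; rw [map_add]; exact add_mem hx hy
  case smul => intro i x c hx; rw [map_smul]; exact Submodule.smul_mem _ c hx

lemma IsGradedDerivation.sq_mul (hD : IsGradedDerivation 𝒜 D)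
    (hDmem : ∀ {i x}, x ∈ 𝒜 i → D x ∈ 𝒜 (i + 1)) {i j : ℤ} {x y : B} (hx : x ∈ 𝒜 i)
    (hy : y ∈ 𝒜 j) : D (D (x * y)) = D (D x) * y + x * D (D y) := by
  rw [hD hx hy, map_add, map_smul, hD (hDmem hx) hy, hD hx (hDmem hy), smul_add, smul_smul,
    neg_one_zpow_mul_self, neg_one_zpow_add]
  module

theorem IsGradedDerivation.sq_eq_zero [GradedAlgebra 𝒜] (hD : IsGradedDerivation 𝒜 D)
    (hS : Algebra.adjoin k (⋃ i, S i) = ⊤) (hS𝒜 : ∀ i, S i ⊆ 𝒜 i)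
    (hDmem : ∀ {i x}, x ∈ 𝒜 i → D x ∈ 𝒜 (i + 1)) (hDDS : ∀ i, ∀ s ∈ S i, D (D s) = 0) :
    D ∘ₗ D = 0 := by
  refine linearMap_ext_homogeneous 𝒜 fun i x hx => ?_
  refine homogeneous_induction (p := fun _ x => D (D x) = 0) hS hS𝒜 hDDS ?one ?mul ?zero ?add
    ?smul hx
  case one => rw [hD.map_one, map_zero]
  case mul =>
    intro i j x y hx hy hDDx hDDy
    rw [hD.sq_mul hDmem hx hy, hDDx, hDDy, zero_mul, mul_zero, add_zero]
  case zero => intro _; simp only [map_zero]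
  case add => intro _ x y hx hy; simp only [map_add, hx, hy, add_zero]
  case smul => intro _ x c hx; simp only [map_smul, hx, smul_zero]

variable (k) in
/-- The matrix that encodes an element `x` of degree `i` together with its derivative `x'`. The
sign in the upper left corner makes the upper right entry of a product the graded Leibniz rule. -/
def leibnizMatrix (i : ℤ) : B × B →ₗ[k] Matrix (Fin 2) (Fin 2) B where
  toFun x := !![(-1 : k) ^ i • x.1, x.2; 0, x.1]
  map_add' x y := by ext i j; fin_cases i <;> fin_cases j <;> simp
  map_smul' c x := by
    ext i j; fin_cases i <;> fin_cases j <;> simp [smul_comm c]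

lemma leibnizMatrix_apply (i : ℤ) (x x' : B) :
    leibnizMatrix k i (x, x') = !![(-1 : k) ^ i • x, x'; 0, x] :=
  rfl

lemma leibnizMatrix_zero_one_zero : leibnizMatrix k 0 ((1, 0) : B × B) = 1 := by
  rw [leibnizMatrix_apply, zpow_zero, one_smul, Matrix.one_fin_two]

lemma leibnizMatrix_mul (i j : ℤ) (x x' y y' : B) :
    leibnizMatrix k i (x, x') * leibnizMatrix k j (y, y') =
      leibnizMatrix k (i + j) (x * y, x' * y + (-1 : k) ^ i • (x * y')) := by
  simp [leibnizMatrix_apply, neg_one_zpow_add, smul_smul, add_comm]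

/-- The upper right entry of a `2 × 2` matrix-valued algebra map. -/
def upperRight (F : B →ₐ[k] Matrix (Fin 2) (Fin 2) B) : B →ₗ[k] B :=
  Matrix.entryLinearMap k B 0 1 ∘ₗ F.toLinearMap

variable {F : B →ₐ[k] Matrix (Fin 2) (Fin 2) B}

lemma upperRight_eq_of_eq_leibnizMatrix {i : ℤ} {x x' : B}
    (h : F x = leibnizMatrix k i (x, x')) : upperRight F x = x' :=
  congrFun (congrFun h 0) 1

lemma eq_leibnizMatrix_of_mem [GradedAlgebra 𝒜] (hS : Algebra.adjoin k (⋃ i, S i) = ⊤)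
    (hS𝒜 : ∀ i, S i ⊆ 𝒜 i) (hFS : ∀ i, ∀ s ∈ S i, ∃ s', F s = leibnizMatrix k i (s, s'))
    {i : ℤ} {x : B} (hx : x ∈ 𝒜 i) : ∃ x', F x = leibnizMatrix k i (x, x') := by
  refine homogeneous_induction (p := fun i x => ∃ x', F x = leibnizMatrix k i (x, x')) hS hS𝒜 hFS
    ?one ?mul ?zero ?add ?smul hx
  case one => exact ⟨0, by rw [map_one, leibnizMatrix_zero_one_zero]⟩
  case mul =>
    rintro i j x y - - ⟨x', hx'⟩ ⟨y', hy'⟩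
    exact ⟨_, by rw [map_mul, hx', hy', leibnizMatrix_mul]⟩
  case zero => exact fun i => ⟨0, by rw [map_zero, Prod.mk_zero_zero, map_zero]⟩
  case add =>
    rintro i x y ⟨x', hx'⟩ ⟨y', hy'⟩
    exact ⟨x' + y', by rw [map_add, hx', hy', ← map_add, Prod.mk_add_mk]⟩
  case smul =>
    rintro i x c ⟨x', hx'⟩
    exact ⟨c • x', by rw [map_smul, hx', ← map_smul, Prod.smul_mk]⟩

theorem isGradedDerivation_upperRight [GradedAlgebra 𝒜] (hS : Algebra.adjoin k (⋃ i, S i) = ⊤)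
    (hS𝒜 : ∀ i, S i ⊆ 𝒜 i) (hFS : ∀ i, ∀ s ∈ S i, ∃ s', F s = leibnizMatrix k i (s, s')) :
    IsGradedDerivation 𝒜 (upperRight F) := by
  intro i j x y hx hy
  obtain ⟨x', hx'⟩ := eq_leibnizMatrix_of_mem hS hS𝒜 hFS hx
  obtain ⟨y', hy'⟩ := eq_leibnizMatrix_of_mem hS hS𝒜 hFS hy
  have hxy : F (x * y) = leibnizMatrix k (i + j) (x * y, x' * y + (-1 : k) ^ i • (x * y')) := by
    rw [map_mul, hx', hy', leibnizMatrix_mul]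
  rw [upperRight_eq_of_eq_leibnizMatrix hx', upperRight_eq_of_eq_leibnizMatrix hy',
    upperRight_eq_of_eq_leibnizMatrix hxy]

end GradedDerivation

section EnvelopingAlgebra

variable {k : Type u} [Field k] {M : Type u} [AddCommGroup M] [Module k M] {P : DGPAOn k M}

instance DGPAOn.decomposition (P : DGPAOn k M) : DirectSum.Decomposition P.gr :=
  P.decomp

lemma DGPAOn.d_one (P : DGPAOn k M) : P.d P.one = 0 := by
  simpa [P.one_mul, P.mul_one] using P.d_mul P.one_mem P.one_mem

section Lifts

variable {B : Type*} [Ring B] [Algebra k B]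

/-- The map `a ↦ f a T^|a|` on homogeneous elements, extended linearly. -/
def singleLift (P : DGPAOn k M) (f : M →ₗ[k] B) : M →ₗ[k] AddMonoidAlgebra B ℤ :=
  homogeneousLift P.gr fun i => AddMonoidAlgebra.lsingle i ∘ₗ f

lemma singleLift_of_mem (f : M →ₗ[k] B) {i : ℤ} {a : M} (ha : a ∈ P.gr i) :
    singleLift P f a = AddMonoidAlgebra.single i (f a) :=
  homogeneousLift_of_mem _ ha

/-- The map sending a homogeneous `a` to the matrix encoding `f a` with derivative `f (d a)`,
extended linearly. -/
def leibnizLift (P : DGPAOn k M) (f : M →ₗ[k] B) : M →ₗ[k] Matrix (Fin 2) (Fin 2) B :=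
  homogeneousLift P.gr fun i => leibnizMatrix k i ∘ₗ f.prod (f ∘ₗ P.d)

lemma leibnizLift_of_mem (f : M →ₗ[k] B) {i : ℤ} {a : M} (ha : a ∈ P.gr i) :
    leibnizLift P f a = leibnizMatrix k i (f a, f (P.d a)) :=
  homogeneousLift_of_mem _ ha

end Lifts

/-- A pair of linear maps `m, h : A → B` satisfying the defining relations of `A^e`, so that it
induces an algebra map `A^e → B`. The relations are only required on homogeneous elements. -/
structure IsEnvPair (P : DGPAOn k M) {B : Type*} [Ring B] [Algebra k B] (m h : M →ₗ[k] B) :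
    Prop where
  m_one : m P.one = 1
  m_mul : ∀ {i j a b}, a ∈ P.gr i → b ∈ P.gr j → m (P.mul a b) = m a * m b
  h_mul : ∀ {i j a b}, a ∈ P.gr i → b ∈ P.gr j →
    h (P.mul a b) = m a * h b + (-1 : k) ^ (i * j) • (m b * h a)
  m_br : ∀ {i j a b}, a ∈ P.gr i → b ∈ P.gr j →
    m (P.br a b) = h a * m b - (-1 : k) ^ (i * j) • (m b * h a)
  h_br : ∀ {i j a b}, a ∈ P.gr i → b ∈ P.gr j →
    h (P.br a b) = h a * h b - (-1 : k) ^ (i * j) • (h b * h a)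

lemma isEnvPair_mgen_hgen (P : DGPAOn k M) : IsEnvPair P (mgen P) (hgen P) where
  m_one := (RingQuot.mkAlgHom_rel k EnvRel.relone).trans (map_one _)
  m_mul {_ _ a b} _ _ := (RingQuot.mkAlgHom_rel k (EnvRel.relmul a b)).trans (map_mul _ _ _)
  h_mul ha hb := (RingQuot.mkAlgHom_rel k (EnvRel.relhmul ha hb)).trans <| by
    rw [map_add, map_smul, map_mul, map_mul]; rfl
  m_br ha hb := (RingQuot.mkAlgHom_rel k (EnvRel.relmbr ha hb)).trans <| by
    rw [map_sub, map_smul, map_mul, map_mul]; rfl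
  h_br ha hb := (RingQuot.mkAlgHom_rel k (EnvRel.relhbr ha hb)).trans <| by
    rw [map_sub, map_smul, map_mul, map_mul]; rfl

namespace IsEnvPair

variable {B : Type*} [Ring B] [Algebra k B] {m h : M →ₗ[k] B}

lemma m_mul_apply (H : IsEnvPair P m h) (a b : M) : m (P.mul a b) = m a * m b := by
  have bilinear_eq : P.mul.compr₂ m = (LinearMap.mul k B).compl₁₂ m m :=
    linearMap_ext_homogeneous P.gr fun i a ha =>
      linearMap_ext_homogeneous P.gr fun j b hb => H.m_mul ha hb
  exact LinearMap.congr_fun₂ bilinear_eq a b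

/-- The algebra map `A^e → B` induced by a pair `m, h : A → B`. -/
def lift (H : IsEnvPair P m h) : Env P →ₐ[k] B :=
  RingQuot.liftAlgHom k ⟨TensorAlgebra.lift k (m.coprod h), fun x y hxy => by
    cases hxy with
    | relone => simp [H.m_one]
    | relmul a b => simp [H.m_mul_apply]
    | relhmul ha hb => simp [H.h_mul ha hb]
    | relmbr ha hb => simp [H.m_br ha hb]
    | relhbr ha hb => simp [H.h_br ha hb]⟩

lemma lift_mgen (H : IsEnvPair P m h) (a : M) : H.lift (mgen P a) = m a := by
  simp [lift, mgen, RingQuot.liftAlgHom_mkAlgHom_apply]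

lemma lift_hgen (H : IsEnvPair P m h) (a : M) : H.lift (hgen P a) = h a := by
  simp [lift, hgen, RingQuot.liftAlgHom_mkAlgHom_apply]

lemma coaction (H : IsEnvPair P m h) :
    IsEnvPair P (singleLift P m) (singleLift P h) where
  m_one := by rw [singleLift_of_mem m P.one_mem, H.m_one, AddMonoidAlgebra.one_def]
  m_mul ha hb := by
    simp only [singleLift_of_mem _ ha, singleLift_of_mem _ hb,
      singleLift_of_mem _ (P.mul_mem ha hb), H.m_mul ha hb, AddMonoidAlgebra.single_mul_single]
  h_mul {i j _ _} ha hb := by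
    simp only [singleLift_of_mem _ ha, singleLift_of_mem _ hb,
      singleLift_of_mem _ (P.mul_mem ha hb), H.h_mul ha hb, AddMonoidAlgebra.single_add,
      AddMonoidAlgebra.smul_single, AddMonoidAlgebra.single_mul_single, add_comm j i]
  m_br {i j _ _} ha hb := by
    simp only [singleLift_of_mem _ ha, singleLift_of_mem _ hb,
      singleLift_of_mem _ (P.br_mem ha hb), H.m_br ha hb, AddMonoidAlgebra.single_sub,
      AddMonoidAlgebra.smul_single, AddMonoidAlgebra.single_mul_single, add_comm j i]
  h_br {i j _ _} ha hb := by
    simp only [singleLift_of_mem _ ha, singleLift_of_mem _ hb,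
      singleLift_of_mem _ (P.br_mem ha hb), H.h_br ha hb, AddMonoidAlgebra.single_sub,
      AddMonoidAlgebra.smul_single, AddMonoidAlgebra.single_mul_single, add_comm j i]

lemma m_d_mul (H : IsEnvPair P m h) {i j : ℤ} {a b : M} (ha : a ∈ P.gr i) (hb : b ∈ P.gr j) :
    m (P.d (P.mul a b)) = m (P.d a) * m b + (-1 : k) ^ i • (m a * m (P.d b)) := by
  rw [P.d_mul ha hb, map_add, map_smul, H.m_mul_apply, H.m_mul_apply]

lemma h_d_mul (H : IsEnvPair P m h) {i j : ℤ} {a b : M} (ha : a ∈ P.gr i) (hb : b ∈ P.gr j) :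
    h (P.d (P.mul a b)) = m (P.d a) * h b + (-1 : k) ^ i • (m a * h (P.d b)) +
      (-1 : k) ^ (i * j) • (m (P.d b) * h a + (-1 : k) ^ j • (m b * h (P.d a))) := by
  rw [P.d_mul ha hb, map_add, map_smul, H.h_mul (P.d_mem ha) hb, H.h_mul ha (P.d_mem hb),
    smul_add, smul_smul, neg_one_zpow_mul_zpow_mul_add_one, neg_one_zpow_add_one_mul]
  module

lemma m_d_br (H : IsEnvPair P m h) {i j : ℤ} {a b : M} (ha : a ∈ P.gr i) (hb : b ∈ P.gr j) :
    m (P.d (P.br a b)) = h (P.d a) * m b + (-1 : k) ^ i • (h a * m (P.d b)) -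
      (-1 : k) ^ (i * j) • (m (P.d b) * h a + (-1 : k) ^ j • (m b * h (P.d a))) := by
  rw [P.d_br ha hb, map_add, map_smul, H.m_br (P.d_mem ha) hb, H.m_br ha (P.d_mem hb),
    smul_sub, smul_smul, neg_one_zpow_mul_zpow_mul_add_one, neg_one_zpow_add_one_mul]
  module

lemma h_d_br (H : IsEnvPair P m h) {i j : ℤ} {a b : M} (ha : a ∈ P.gr i) (hb : b ∈ P.gr j) :
    h (P.d (P.br a b)) = h (P.d a) * h b + (-1 : k) ^ i • (h a * h (P.d b)) -
      (-1 : k) ^ (i * j) • (h (P.d b) * h a + (-1 : k) ^ j • (h b * h (P.d a))) := by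
  rw [P.d_br ha hb, map_add, map_smul, H.h_br (P.d_mem ha) hb, H.h_br ha (P.d_mem hb),
    smul_sub, smul_smul, neg_one_zpow_mul_zpow_mul_add_one, neg_one_zpow_add_one_mul]
  module

lemma leibniz (H : IsEnvPair P m h) :
    IsEnvPair P (leibnizLift P m) (leibnizLift P h) where
  m_one := by
    rw [leibnizLift_of_mem m P.one_mem, P.d_one, H.m_one, map_zero, leibnizMatrix_zero_one_zero]
  m_mul ha hb := by
    simp only [leibnizLift_of_mem _ ha, leibnizLift_of_mem _ hb,
      leibnizLift_of_mem _ (P.mul_mem ha hb), leibnizMatrix_mul, H.m_mul ha hb, H.m_d_mul ha hb]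
  h_mul {i j _ _} ha hb := by
    simp only [leibnizLift_of_mem _ ha, leibnizLift_of_mem _ hb,
      leibnizLift_of_mem _ (P.mul_mem ha hb), leibnizMatrix_mul, H.h_mul ha hb, H.h_d_mul ha hb,
      add_comm j i, ← map_smul, ← map_add, Prod.smul_mk, Prod.mk_add_mk]
  m_br {i j _ _} ha hb := by
    simp only [leibnizLift_of_mem _ ha, leibnizLift_of_mem _ hb,
      leibnizLift_of_mem _ (P.br_mem ha hb), leibnizMatrix_mul, H.m_br ha hb, H.m_d_br ha hb,
      add_comm j i, ← map_smul, ← map_sub, Prod.smul_mk, Prod.mk_sub_mk]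
  h_br {i j _ _} ha hb := by
    simp only [leibnizLift_of_mem _ ha, leibnizLift_of_mem _ hb,
      leibnizLift_of_mem _ (P.br_mem ha hb), leibnizMatrix_mul, H.h_br ha hb, H.h_d_br ha hb,
      add_comm j i, ← map_smul, ← map_sub, Prod.smul_mk, Prod.mk_sub_mk]

end IsEnvPair

/-- The generators `m_a`, `h_a` of `A^e` with `a` homogeneous of degree `i`. -/
def envGenerators (P : DGPAOn k M) (i : ℤ) : Set (Env P) :=
  mgen P '' P.gr i ∪ hgen P '' P.gr i

lemma forall_mem_envGenerators {i : ℤ} {p : Env P → Prop} :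
    (∀ s ∈ envGenerators P i, p s) ↔ ∀ a ∈ P.gr i, p (mgen P a) ∧ p (hgen P a) := by
  simp only [envGenerators, Set.mem_union, or_imp, forall_and, Set.forall_mem_image,
    SetLike.mem_coe]

lemma adjoin_envGenerators (P : DGPAOn k M) :
    Algebra.adjoin k (⋃ i, envGenerators P i) = ⊤ := by
  set E := Algebra.adjoin k (⋃ i, envGenerators P i)
  have homogeneous_mem (i : ℤ) (a : M) (ha : a ∈ P.gr i) : mgen P a ∈ E ∧ hgen P a ∈ E :=
    forall_mem_envGenerators.mp
      (fun _ hs => Algebra.subset_adjoin (Set.mem_iUnion_of_mem i hs)) a ha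
  have mem (a : M) : mgen P a ∈ E ∧ hgen P a ∈ E := by
    induction a using DirectSum.Decomposition.inductionOn P.gr with
    | zero => simp only [map_zero, zero_mem, and_self]
    | homogeneous a => exact homogeneous_mem _ a a.2
    | add a b ha hb =>
      simp only [map_add]
      exact ⟨add_mem ha.1 hb.1, add_mem ha.2 hb.2⟩
  have mkAlgHom_ι_mem (ab : M × M) :
      RingQuot.mkAlgHom k (EnvRel P) (TensorAlgebra.ι k ab) ∈ E := by
    have split : RingQuot.mkAlgHom k (EnvRel P) (TensorAlgebra.ι k ab) =
        mgen P ab.1 + hgen P ab.2 := by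
      simp only [mgen, hgen, LinearMap.comp_apply, AlgHom.toLinearMap_apply, ← map_add,
        LinearMap.inl_apply, LinearMap.inr_apply, Prod.fst_add_snd]
    exact split ▸ add_mem (mem ab.1).1 (mem ab.2).2
  rw [eq_top_iff, ← (AlgHom.range_eq_top _).mpr (RingQuot.mkAlgHom_surjective k (EnvRel P)),
    ← Algebra.map_top, ← TensorAlgebra.adjoin_range_ι, AlgHom.map_adjoin]
  refine Algebra.adjoin_le ?_
  rintro _ ⟨_, ⟨ab, rfl⟩, rfl⟩
  exact mkAlgHom_ι_mem ab

/-- The algebra map `A^e → A^e[T, T⁻¹]` with `m_a ↦ m_a T^|a|` and `h_a ↦ h_a T^|a|`. -/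
def envCoaction (P : DGPAOn k M) : Env P →ₐ[k] AddMonoidAlgebra (Env P) ℤ :=
  (isEnvPair_mgen_hgen P).coaction.lift

/-- The grading of `A^e` in which `m_a` and `h_a` have the degree of `a`. -/
abbrev envGrading (P : DGPAOn k M) : ℤ → Submodule k (Env P) :=
  coactionGrading (envCoaction P)

lemma mgen_mem_envGrading {i : ℤ} {a : M} (ha : a ∈ P.gr i) : mgen P a ∈ envGrading P i := by
  rw [mem_coactionGrading, envCoaction, IsEnvPair.lift_mgen, singleLift_of_mem _ ha]

lemma hgen_mem_envGrading {i : ℤ} {a : M} (ha : a ∈ P.gr i) : hgen P a ∈ envGrading P i := by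
  rw [mem_coactionGrading, envCoaction, IsEnvPair.lift_hgen, singleLift_of_mem _ ha]

lemma envGenerators_subset_envGrading (P : DGPAOn k M) (i : ℤ) :
    envGenerators P i ⊆ envGrading P i :=
  forall_mem_envGenerators.mpr fun _ ha => ⟨mgen_mem_envGrading ha, hgen_mem_envGrading ha⟩

instance envGrading_gradedAlgebra (P : DGPAOn k M) : GradedAlgebra (envGrading P) where
  toDecomposition := (isInternal_coactionGrading (adjoin_envGenerators P)
    (envGenerators_subset_envGrading P)).chooseDecomposition

/-- The algebra map `A^e → M₂(A^e)` whose upper right entry is the differential `∂`. -/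
def envLeibniz (P : DGPAOn k M) : Env P →ₐ[k] Matrix (Fin 2) (Fin 2) (Env P) :=
  (isEnvPair_mgen_hgen P).leibniz.lift

lemma envLeibniz_mgen {i : ℤ} {a : M} (ha : a ∈ P.gr i) :
    envLeibniz P (mgen P a) = leibnizMatrix k i (mgen P a, mgen P (P.d a)) := by
  rw [envLeibniz, IsEnvPair.lift_mgen, leibnizLift_of_mem _ ha]

lemma envLeibniz_hgen {i : ℤ} {a : M} (ha : a ∈ P.gr i) :
    envLeibniz P (hgen P a) = leibnizMatrix k i (hgen P a, hgen P (P.d a)) := by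
  rw [envLeibniz, IsEnvPair.lift_hgen, leibnizLift_of_mem _ ha]

/-- The differential `∂` of `A^e`, with `∂ m_a = m_{d a}` and `∂ h_a = h_{d a}`. -/
def envDifferential (P : DGPAOn k M) : Env P →ₗ[k] Env P :=
  upperRight (envLeibniz P)

lemma envDifferential_mgen (P : DGPAOn k M) (a : M) :
    envDifferential P (mgen P a) = mgen P (P.d a) := by
  have comp_eq : envDifferential P ∘ₗ mgen P = mgen P ∘ₗ P.d :=
    linearMap_ext_homogeneous P.gr fun _ _ ha =>
      upperRight_eq_of_eq_leibnizMatrix (envLeibniz_mgen ha)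
  exact LinearMap.congr_fun comp_eq a

lemma envDifferential_hgen (P : DGPAOn k M) (a : M) :
    envDifferential P (hgen P a) = hgen P (P.d a) := by
  have comp_eq : envDifferential P ∘ₗ hgen P = hgen P ∘ₗ P.d :=
    linearMap_ext_homogeneous P.gr fun _ _ ha =>
      upperRight_eq_of_eq_leibnizMatrix (envLeibniz_hgen ha)
  exact LinearMap.congr_fun comp_eq a

lemma isGradedDerivation_envDifferential (P : DGPAOn k M) :
    IsGradedDerivation (envGrading P) (envDifferential P) :=
  isGradedDerivation_upperRight (adjoin_envGenerators P) (envGenerators_subset_envGrading P)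
    fun _ => forall_mem_envGenerators.mpr fun _ ha =>
      ⟨⟨_, envLeibniz_mgen ha⟩, ⟨_, envLeibniz_hgen ha⟩⟩

lemma envDifferential_mem {i : ℤ} {x : Env P} (hx : x ∈ envGrading P i) :
    envDifferential P x ∈ envGrading P (i + 1) := by
  refine (isGradedDerivation_envDifferential P).map_mem (adjoin_envGenerators P)
    (envGenerators_subset_envGrading P) (fun _ => forall_mem_envGenerators.mpr fun a ha => ?_) hx
  rw [envDifferential_mgen, envDifferential_hgen]
  exact ⟨mgen_mem_envGrading (P.d_mem ha), hgen_mem_envGrading (P.d_mem ha)⟩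

lemma envDifferential_comp_self (P : DGPAOn k M) : envDifferential P ∘ₗ envDifferential P = 0 := by
  refine (isGradedDerivation_envDifferential P).sq_eq_zero (adjoin_envGenerators P)
    (envGenerators_subset_envGrading P) envDifferential_mem
    fun _ => forall_mem_envGenerators.mpr fun a _ => ?_
  simp only [envDifferential_mgen, envDifferential_hgen, P.d_sq, map_zero, and_self]

/-- The differential graded algebra `(A^e, ∂)`. -/
def envDGA (P : DGPAOn k M) : DGAOn k (Env P) where
  gr := envGrading P
  decomp := inferInstance
  mul := LinearMap.mul k (Env P)
  one := 1
  one_mem := SetLike.one_mem_graded (envGrading P)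
  mul_mem hx hy := SetLike.mul_mem_graded hx hy
  mul_assoc := mul_assoc
  one_mul := one_mul
  mul_one := mul_one
  d := envDifferential P
  d_mem := envDifferential_mem
  d_sq := LinearMap.congr_fun (envDifferential_comp_self P)
  d_mul hx hy := isGradedDerivation_envDifferential P hx hy

end EnvelopingAlgebra

/-- the map `∂` determined on the generators of `A^e` by `∂(m_a) = m_{d a}`
and `∂(h_a) = h_{d a}` and the graded Leibniz rule is a well-defined differential on
`A^e` with `∂² = 0`, so that `(A^e, ∂)` is a differential graded algebra. -/
theorem stmt_6 (k : Type u) [Field k] (M : Type u) [AddCommGroup M] [Module k M]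
    (P : DGPAOn k M) :
    ∃ E : DGAOn k (Env P), IsEnvDGA P E := by
  exact ⟨envDGA P, fun _ _ => rfl, rfl, mgen_mem_envGrading, hgen_mem_envGrading,
    envDifferential_mgen P, envDifferential_hgen P⟩

end DGPaper

end
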